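/- arXiv:1510.01343 — 2 statements merged into one kernel-verified Lean document; each statement's English description precedes it below -/
import Mathlib

section
/- Let P_1, …, P_n ∈ ℤ[t] be integer polynomials, not all zero. Then the functions t ↦ gcd(P_1(t), …, P_n(t)) and t ↦ lcm(P_1(t), …, P_n(t)) (taking nonnegative gcd and lcm of integers) on the positive integers are eventually quasi-polynomial: for each of them there exist a positive integer d and polynomials Q_0, …, Q_{d−1} ∈ ℚ[t] such that for all sufficiently large positive integers t the function value equals Q_{t mod d}(t). -/
/-!
Call `f : ℕ → ℚ` eventually quasi-polynomial (EQP) if it has the shape required in the theorem.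
The class of EQP functions is closed under products, absolute values of polynomials belong to it,
and membership can be checked on each residue class separately (`IsEQP.of_residues`). Hence it
suffices to show that the pairwise gcd and lcm of integer-valued EQP functions are EQP
(`IsEQP.gcd_lcm`) and to induct on the finite family.

On a residue class the two functions are given by `F, G ∈ ℚ[X]`. Dividing by the gcd `H` of `F`
and `G` in `ℚ[X]` and clearing denominators, `F(t) = q(t) a(t)` and `G(t) = q(t) b(t)` with
`a, b ∈ ℤ[X]`, where `q` is a rational multiple of `H`, and a Bézout relation `U a + V b = m` with
a nonzero constant `m ∈ ℤ` (`exists_bezout_factorization`). So `gcd (a(t), b(t))` divides `m` and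
therefore depends only on `t` modulo `m`, and
`gcd (F(t), G(t)) = |q(t)| gcd (a(t), b(t))`,
`lcm (F(t), G(t)) = |q(t)| |a(t) b(t)| / gcd (a(t), b(t))`
are products of EQP functions.
-/

open Polynomial Filter

/-- Eventually quasi-polynomial functions on the natural numbers, with values in `ℚ`. The residue
`t % d` indexes a family of polynomials of which only the first `d` members matter. -/
def IsEQP (f : ℕ → ℚ) : Prop :=
  ∃ d : ℕ, 0 < d ∧ ∃ Q : ℕ → ℚ[X], ∀ᶠ t : ℕ in atTop, f t = (Q (t % d)).eval (t : ℚ)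

lemma IsEQP.of_poly (p : ℚ[X]) : IsEQP (fun t => p.eval (t : ℚ)) :=
  ⟨1, one_pos, fun _ => p, Eventually.of_forall fun _ => rfl⟩

lemma IsEQP.of_periodic {f : ℕ → ℚ} {d : ℕ} (hd : 0 < d) (h : ∀ t, f t = f (t % d)) : IsEQP f :=
  ⟨d, hd, fun r => C (f r), Eventually.of_forall fun t => by rw [eval_C]; exact h t⟩

lemma IsEQP.congr {f g : ℕ → ℚ} (hg : IsEQP g) (h : ∀ᶠ t in atTop, f t = g t) : IsEQP f := by
  obtain ⟨d, hd, Q, hQ⟩ := hg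
  exact ⟨d, hd, Q, by filter_upwards [h, hQ] with t h1 h2 using h1.trans h2⟩

lemma IsEQP.mul {f g : ℕ → ℚ} (hf : IsEQP f) (hg : IsEQP g) : IsEQP (fun t => f t * g t) := by
  obtain ⟨d, hd, Q, hQ⟩ := hf
  obtain ⟨e, he, R, hR⟩ := hg
  refine ⟨d * e, Nat.mul_pos hd he, fun r => Q (r % d) * R (r % e), ?_⟩
  filter_upwards [hQ, hR] with t h1 h2
  rw [eval_mul, Nat.mod_mod_of_dvd _ (Dvd.intro _ rfl), Nat.mod_mod_of_dvd _ (Dvd.intro_left _ rfl),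
    h1, h2]

/-- A function that agrees eventually with some EQP function on each residue class modulo a fixed
`d` is itself EQP: the product of `d` and all the periods is a period. -/
lemma IsEQP.of_residues {f : ℕ → ℚ} {d : ℕ} (hd : 0 < d)
    (h : ∀ r : ℕ, ∃ g, IsEQP g ∧ ∀ᶠ t in atTop, t % d = r → f t = g t) : IsEQP f := by
  choose g hg hfg using h
  choose e he Q hQ using hg
  refine ⟨d * ∏ r ∈ Finset.range d, e r,
    Nat.mul_pos hd (Finset.prod_pos fun r _ => he r),
    fun r => Q (r % d) (r % e (r % d)), ?_⟩
  have h1 : ∀ᶠ t in atTop, ∀ r ∈ Finset.range d,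
      (t % d = r → f t = g r t) ∧ g r t = (Q r (t % e r)).eval (t : ℚ) :=
    (eventually_all_finset _).2 fun r _ => (hfg r).and (hQ r)
  filter_upwards [h1] with t ht
  have hr : t % d ∈ Finset.range d := Finset.mem_range.2 (Nat.mod_lt _ hd)
  obtain ⟨h2, h3⟩ := ht _ hr
  rw [Nat.mod_mod_of_dvd _ (Dvd.intro _ rfl), Nat.mod_mod_of_dvd t
    ((Finset.dvd_prod_of_mem e hr).trans (Dvd.intro_left _ rfl)), h2 rfl, h3]

lemma eventually_eval_nonneg (p : ℚ[X]) (hp : 0 ≤ p.leadingCoeff) :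
    ∀ᶠ t : ℕ in atTop, 0 ≤ p.eval (t : ℚ) := by
  by_cases hdeg : 0 < p.degree
  · exact ((p.tendsto_atTop_of_leadingCoeff_nonneg hdeg hp).comp
      tendsto_natCast_atTop_atTop).eventually_ge_atTop 0
  · rw [eq_C_of_degree_le_zero (not_lt.1 hdeg)] at hp ⊢
    exact Eventually.of_forall fun t => by simpa using hp

lemma IsEQP.abs_poly (p : ℚ[X]) : IsEQP (fun t => |p.eval (t : ℚ)|) := by
  rcases le_total 0 p.leadingCoeff with h | h
  · refine (IsEQP.of_poly p).congr ?_
    filter_upwards [eventually_eval_nonneg p h] with t ht using abs_of_nonneg ht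
  · refine (IsEQP.of_poly (-p)).congr ?_
    filter_upwards [eventually_eval_nonneg (-p) (by simpa using h)] with t ht
    rw [eval_neg] at ht ⊢
    exact abs_of_nonpos (by linarith)

lemma exists_clear_denominators (p : ℚ[X]) :
    ∃ N : ℤ, N ≠ 0 ∧ ∃ q : ℤ[X], q.map (Int.castRingHom ℚ) = C (N : ℚ) * p := by
  obtain ⟨b, hb, h⟩ := IsLocalization.integerNormalization_spec (nonZeroDivisors ℤ) p
  refine ⟨b, nonZeroDivisors.ne_zero hb, _, h.trans ?_⟩
  ext n
  simp

/-- Two rational polynomials, not both zero, are rational multiples `q a` and `q b` of integer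
polynomials `a`, `b` that generate an ideal of `ℤ[X]` containing a nonzero constant. -/
lemma exists_bezout_factorization (F G : ℚ[X]) (h : ¬ (F = 0 ∧ G = 0)) :
    ∃ (q : ℚ[X]) (a b U V : ℤ[X]) (m : ℤ), m ≠ 0 ∧ U * a + V * b = C m ∧
      F = q * a.map (Int.castRingHom ℚ) ∧ G = q * b.map (Int.castRingHom ℚ) := by
  obtain ⟨A, hA⟩ := EuclideanDomain.gcd_dvd_left F G
  obtain ⟨B, hB⟩ := EuclideanDomain.gcd_dvd_right F G
  have hbez := EuclideanDomain.gcd_eq_gcd_ab F G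
  have hH : EuclideanDomain.gcd F G ≠ 0 := fun h0 => h (EuclideanDomain.gcd_eq_zero_iff.1 h0)
  generalize EuclideanDomain.gcd F G = H at *
  generalize EuclideanDomain.gcdA F G = u at *
  generalize EuclideanDomain.gcdB F G = v at *
  have h1 : A * u + B * v = 1 := by
    apply mul_left_cancel₀ hH
    rw [mul_one]
    conv_rhs => rw [hbez, hA, hB]
    ring
  obtain ⟨n₁, hn₁, a, ha⟩ := exists_clear_denominators A
  obtain ⟨n₂, hn₂, b, hb⟩ := exists_clear_denominators B
  obtain ⟨n₃, hn₃, U, hU⟩ := exists_clear_denominators u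
  obtain ⟨n₄, hn₄, V, hV⟩ := exists_clear_denominators v
  have hc : (C ((n₁ * n₂ : ℚ)⁻¹) : ℚ[X]) * (C (n₁ : ℚ) * C (n₂ : ℚ)) = 1 := by
    rw [← C_mul, ← C_mul, inv_mul_cancel₀ (by positivity), C_1]
  have hC : ∀ n : ℤ, (C n).map (Int.castRingHom ℚ) = C (n : ℚ) := fun n => map_C _
  -- Cross-multiplying by the denominators gives `A, B` and `u, v` common denominators.
  refine ⟨C ((n₁ * n₂ : ℚ)⁻¹) * H, C n₂ * a, C n₁ * b, C n₄ * U, C n₃ * V,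
    n₁ * n₂ * (n₃ * n₄), by positivity, ?_, ?_, ?_⟩
  · apply map_injective (Int.castRingHom ℚ) Int.cast_injective
    simp only [Polynomial.map_add, Polynomial.map_mul, hC, ha, hb, hU, hV,
      Int.cast_mul, C_mul]
    linear_combination (C (n₁ : ℚ) * C (n₂ : ℚ) * (C (n₃ : ℚ) * C (n₄ : ℚ))) * h1
  · simp only [Polynomial.map_mul, hC, ha]
    linear_combination hA - H * A * hc
  · simp only [Polynomial.map_mul, hC, hb]
    linear_combination hB - H * B * hc

/-- A Bézout relation with constant value `m` makes `gcd (a(t), b(t))` depend only on `t` modulo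
`m`. -/
lemma gcd_eval_dvd_gcd_eval {a b U V : ℤ[X]} {m : ℤ} (h : U * a + V * b = C m) {s t : ℤ}
    (hst : m ∣ t - s) : Int.gcd (a.eval t) (b.eval t) ∣ Int.gcd (a.eval s) (b.eval s) := by
  have ha := Int.gcd_dvd_left (a.eval t) (b.eval t)
  have hb := Int.gcd_dvd_right (a.eval t) (b.eval t)
  have hm : ((Int.gcd (a.eval t) (b.eval t) : ℕ) : ℤ) ∣ m := by
    have := congrArg (eval t) h
    simp only [eval_add, eval_mul, eval_C] at this
    rw [← this]
    exact dvd_add (ha.mul_left _) (hb.mul_left _)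
  have key : ∀ p : ℤ[X], ((Int.gcd (a.eval t) (b.eval t) : ℕ) : ℤ) ∣ p.eval t - p.eval s :=
    fun p => (hm.trans hst).trans (sub_dvd_eval_sub t s p)
  exact Int.dvd_gcd ((dvd_sub_right ha).1 (key a)) ((dvd_sub_right hb).1 (key b))

lemma gcd_of_eq_rat_mul {x y a b : ℤ} {q : ℚ} (hx : (x : ℚ) = q * a) (hy : (y : ℚ) = q * b) :
    (Int.gcd x y : ℚ) = |q| * Int.gcd a b := by
  have hd : (q.den : ℚ) ≠ 0 := by exact_mod_cast q.den_nz
  have hq : q * q.den = q.num := Rat.mul_den_eq_num q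
  have hx' : (q.den : ℤ) * x = q.num * a := by
    have : (q.den : ℚ) * x = q.num * a := by rw [hx, ← hq]; ring
    exact_mod_cast this
  have hy' : (q.den : ℤ) * y = q.num * b := by
    have : (q.den : ℚ) * y = q.num * b := by rw [hy, ← hq]; ring
    exact_mod_cast this
  have h := Int.gcd_mul_left (q.den : ℤ) x y
  rw [hx', hy', Int.gcd_mul_left, Int.natAbs_natCast] at h
  have h' : |(q.num : ℚ)| * Int.gcd a b = q.den * Int.gcd x y := by
    rw [← Int.cast_abs, ← Nat.cast_natAbs]
    exact_mod_cast h
  rw [← hq, abs_mul, Nat.abs_cast] at h'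
  apply mul_left_cancel₀ hd
  rw [← h']
  ring

lemma lcm_of_eq_rat_mul {x y a b : ℤ} {q : ℚ} (hab : Int.gcd a b ≠ 0)
    (hx : (x : ℚ) = q * a) (hy : (y : ℚ) = q * b) :
    (Int.lcm x y : ℚ) = |q| * (|(a : ℚ)| * |(b : ℚ)| * (Int.gcd a b : ℚ)⁻¹) := by
  have hab' : (Int.gcd a b : ℚ) ≠ 0 := by exact_mod_cast hab
  by_cases hq : q = 0
  · subst hq
    have : x = 0 := by simpa using hx
    simp [this]
  · have h : (Int.gcd x y : ℚ) * Int.lcm x y = |(x : ℚ)| * |(y : ℚ)| := by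
      have h0 := Int.gcd_mul_lcm x y
      rw [← Int.cast_abs, ← Int.cast_abs, ← Nat.cast_natAbs, ← Nat.cast_natAbs]
      exact_mod_cast h0
    rw [gcd_of_eq_rat_mul hx hy, hx, hy, abs_mul, abs_mul] at h
    have hq' : |q| ≠ 0 := abs_ne_zero.2 hq
    apply mul_left_cancel₀ (mul_ne_zero hq' hab')
    rw [h]
    field_simp

lemma eval_map_natCast (p : ℤ[X]) (t : ℕ) :
    (p.map (Int.castRingHom ℚ)).eval (t : ℚ) = ((p.eval (t : ℤ) : ℤ) : ℚ) := by
  simpa using eval_intCast_map (Int.castRingHom ℚ) p (t : ℤ)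

/-- The pairwise step: gcd and lcm of two integer-valued EQP functions are EQP. -/
lemma IsEQP.gcd_lcm {f g : ℕ → ℤ} (hf : IsEQP (fun t => (f t : ℚ)))
    (hg : IsEQP (fun t => (g t : ℚ))) :
    IsEQP (fun t => (Int.gcd (f t) (g t) : ℚ)) ∧ IsEQP (fun t => (Int.lcm (f t) (g t) : ℚ)) := by
  -- The version for two fixed polynomials, valid wherever `f` and `g` agree with them.
  have core : ∀ F G : ℚ[X], ∃ γ μ : ℕ → ℚ, IsEQP γ ∧ IsEQP μ ∧
      ∀ t : ℕ, (f t : ℚ) = F.eval (t : ℚ) → (g t : ℚ) = G.eval (t : ℚ) →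
        (Int.gcd (f t) (g t) : ℚ) = γ t ∧ (Int.lcm (f t) (g t) : ℚ) = μ t := by
    intro F G
    by_cases h0 : F = 0 ∧ G = 0
    · refine ⟨_, _, IsEQP.of_poly 0, IsEQP.of_poly 0, fun t h1 h2 => ?_⟩
      rw [h0.1, eval_zero, Int.cast_eq_zero] at h1
      rw [h0.2, eval_zero, Int.cast_eq_zero] at h2
      simp [h1, h2]
    obtain ⟨q, a, b, U, V, m, hm, hbez, hF, hG⟩ := exists_bezout_factorization F G h0
    have hper : ∀ t : ℕ, Int.gcd (a.eval (t : ℤ)) (b.eval (t : ℤ)) =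
        Int.gcd (a.eval ((t % m.natAbs : ℕ) : ℤ)) (b.eval ((t % m.natAbs : ℕ) : ℤ)) := by
      intro t
      have hdvd : m ∣ (t : ℤ) - ((t % m.natAbs : ℕ) : ℤ) := by
        rw [← Int.natAbs_dvd, Int.natCast_mod]
        exact Int.dvd_self_sub_emod
      exact Nat.dvd_antisymm (gcd_eval_dvd_gcd_eval hbez hdvd)
        (gcd_eval_dvd_gcd_eval hbez ((dvd_sub_comm).1 hdvd))
    have hne : ∀ t : ℕ, Int.gcd (a.eval (t : ℤ)) (b.eval (t : ℤ)) ≠ 0 := by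
      intro t h
      rw [Int.gcd_eq_zero_iff] at h
      have := congrArg (eval (t : ℤ)) hbez
      simp only [eval_add, eval_mul, eval_C, h.1, h.2, mul_zero, add_zero] at this
      exact hm this.symm
    have hmpos : 0 < m.natAbs := Int.natAbs_pos.2 hm
    refine ⟨_, _,
      (IsEQP.abs_poly q).mul (IsEQP.of_periodic hmpos
        (f := fun t => (Int.gcd (a.eval (t : ℤ)) (b.eval (t : ℤ)) : ℚ))
        fun t => by simp only [hper t]),
      (IsEQP.abs_poly q).mul (((IsEQP.abs_poly (a.map (Int.castRingHom ℚ))).mul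
        (IsEQP.abs_poly (b.map (Int.castRingHom ℚ)))).mul (IsEQP.of_periodic hmpos
        (f := fun t => (Int.gcd (a.eval (t : ℤ)) (b.eval (t : ℤ)) : ℚ)⁻¹)
        fun t => by simp only [hper t])), fun t h1 h2 => ?_⟩
    rw [hF, eval_mul, eval_map_natCast] at h1
    rw [hG, eval_mul, eval_map_natCast] at h2
    simp only [eval_map_natCast]
    exact ⟨gcd_of_eq_rat_mul h1 h2, lcm_of_eq_rat_mul (hne t) h1 h2⟩
  obtain ⟨d, hd, Q, hQ⟩ := hf
  obtain ⟨e, he, R, hR⟩ := hg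
  have hmod : ∀ r t, t % (d * e) = r → t % d = r % d ∧ t % e = r % e := by
    rintro r t rfl
    exact ⟨(Nat.mod_mod_of_dvd _ (Dvd.intro _ rfl)).symm,
      (Nat.mod_mod_of_dvd _ (Dvd.intro_left _ rfl)).symm⟩
  choose γ μ hγ hμ h using core
  constructor
  · refine IsEQP.of_residues (Nat.mul_pos hd he)
      fun r => ⟨_, hγ (Q (r % d)) (R (r % e)), ?_⟩
    filter_upwards [hQ, hR] with t h1 h2 hr
    rw [(hmod r t hr).1] at h1
    rw [(hmod r t hr).2] at h2
    exact (h _ _ t h1 h2).1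
  · refine IsEQP.of_residues (Nat.mul_pos hd he)
      fun r => ⟨_, hμ (Q (r % d)) (R (r % e)), ?_⟩
    filter_upwards [hQ, hR] with t h1 h2 hr
    rw [(hmod r t hr).1] at h1
    rw [(hmod r t hr).2] at h2
    exact (h _ _ t h1 h2).2

lemma IsEQP.of_int_poly (p : ℤ[X]) : IsEQP (fun t => ((p.eval (t : ℤ) : ℤ) : ℚ)) :=
  (IsEQP.of_poly (p.map (Int.castRingHom ℚ))).congr
    (Eventually.of_forall fun t => (eval_map_natCast p t).symm)

lemma IsEQP.finset_gcd {ι : Type*} (s : Finset ι) (P : ι → ℤ[X]) :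
    IsEQP (fun t => ((s.gcd (fun i => (P i).eval (t : ℤ)) : ℤ) : ℚ)) := by
  classical
  induction s using Finset.induction_on with
  | empty => simpa using IsEQP.of_poly 0
  | insert i s _ ih =>
    simp only [Finset.gcd_insert, ← Int.coe_gcd, Int.cast_natCast]
    exact ((IsEQP.of_int_poly (P i)).gcd_lcm ih).1

lemma IsEQP.finset_lcm {ι : Type*} (s : Finset ι) (P : ι → ℤ[X]) :
    IsEQP (fun t => ((s.lcm (fun i => (P i).eval (t : ℤ)) : ℤ) : ℚ)) := by
  classical
  induction s using Finset.induction_on with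
  | empty => simpa using IsEQP.of_poly 1
  | insert i s _ ih =>
    simp only [Finset.lcm_insert, ← Int.coe_lcm, Int.cast_natCast]
    exact ((IsEQP.of_int_poly (P i)).gcd_lcm ih).2

/-- For integer polynomials `P₁, …, Pₙ`, not all zero, the functions
`t ↦ gcd(P₁(t), …, Pₙ(t))` and `t ↦ lcm(P₁(t), …, Pₙ(t))` (nonnegative gcd and lcm)
are eventually quasi-polynomial. -/
theorem gcd_lcm_of_polynomials_EQP (n : ℕ) (hn : 0 < n)
    (P : Fin n → Polynomial ℤ) (hP : ∃ i, P i ≠ 0) :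
    (∃ d : ℕ, 0 < d ∧ ∃ Q : ℕ → Polynomial ℚ,
      ∀ᶠ t : ℕ in Filter.atTop,
        ((Finset.univ.gcd (fun i : Fin n => (P i).eval (t : ℤ)) : ℤ) : ℚ) =
          (Q (t % d)).eval (t : ℚ)) ∧
    (∃ d : ℕ, 0 < d ∧ ∃ Q : ℕ → Polynomial ℚ,
      ∀ᶠ t : ℕ in Filter.atTop,
        ((Finset.univ.lcm (fun i : Fin n => (P i).eval (t : ℤ)) : ℤ) : ℚ) =
          (Q (t % d)).eval (t : ℚ)) :=
  ⟨IsEQP.finset_gcd Finset.univ P, IsEQP.finset_lcm Finset.univ P⟩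
end

section
/- Let f, g ∈ ℤ[t] be integer polynomials with g nonzero. Then the function t ↦ ⌊f(t)/g(t)⌋, defined for all positive integers t with g(t) ≠ 0 (hence for all sufficiently large t), is eventually quasi-polynomial: there exist a positive integer d and polynomials Q_0, …, Q_{d−1} ∈ ℚ[t] such that ⌊f(t)/g(t)⌋ = Q_{t mod d}(t) for all sufficiently large positive integers t. -/
/-!
Divide over `ℚ`: `f = q g + r` with `deg r < deg g`, and write `q = P / b` with `P ∈ ℤ[t]`, `b > 0`.
Then `f(t)/g(t) = P(t)/b + ε(t)` where `ε = r/g` tends to `0` and is eventually of constant sign.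
As soon as `|ε(t)| < 1/b`, the value of `⌊P(t)/b + ε(t)⌋` is `⌊(P(t) - c)/b⌋`, where `c = 0` if `ε`
is eventually nonnegative and `c = 1` if it is eventually negative
(`floor_div_add_eq_ediv`). Finally the remainder of `P(t) - c` modulo `b` depends only on
`t mod b`, so this floor is a quasi-polynomial of period `b`.
-/

open Polynomial Filter

/-- A number in `[n/b, (n+1)/b)` has the same integer part as `n/b`. -/
lemma floor_div_add_eq_ediv (n b : ℤ) (hb : 0 < b) (e : ℚ) (h0 : 0 ≤ e) (h1 : e < 1 / b) :
    ⌊(n : ℚ) / b + e⌋ = n / b := by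
  have hbq : (0 : ℚ) < b := by exact_mod_cast hb
  have hn : (n : ℚ) = b * (n / b : ℤ) + (n % b : ℤ) := by
    exact_mod_cast (Int.mul_ediv_add_emod n b).symm
  have hr0 : (0 : ℚ) ≤ (n % b : ℤ) := by exact_mod_cast Int.emod_nonneg n hb.ne'
  have hr1 : ((n % b : ℤ) : ℚ) + 1 ≤ b := by exact_mod_cast Int.emod_lt_of_pos n hb
  have hs : (n : ℚ) / b = (n / b : ℤ) + (n % b : ℤ) / (b : ℚ) := by
    rw [div_eq_iff hbq.ne', add_mul, div_mul_cancel₀ _ hbq.ne']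
    linarith
  have hq0 : (0 : ℚ) ≤ (n % b : ℤ) / (b : ℚ) := by positivity
  have hq1 : ((n % b : ℤ) : ℚ) / b + 1 / b ≤ 1 := by
    rw [← add_div, div_le_one hbq]
    exact hr1
  rw [Int.floor_eq_iff, hs]
  constructor <;> linarith

lemma eventually_eval_nonneg_or_neg (p : ℚ[X]) :
    (∀ᶠ x : ℚ in atTop, 0 ≤ p.eval x) ∨ (∀ᶠ x : ℚ in atTop, p.eval x < 0) := by
  by_cases hd : 0 < p.degree
  · rcases le_or_gt 0 p.leadingCoeff with h | h
    · exact .inl ((p.tendsto_atTop_of_leadingCoeff_nonneg hd h).eventually_ge_atTop 0)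
    · exact .inr ((p.tendsto_atBot_of_leadingCoeff_nonpos hd h.le).eventually_lt_atBot 0)
  · rw [eq_C_of_degree_le_zero (not_lt.mp hd)]
    simp only [eval_C, eventually_const]
    exact le_or_gt _ _

/-- Clearing denominators in a rational polynomial. -/
lemma exists_int_poly_eq_mul (q : ℚ[X]) :
    ∃ b : ℤ, 0 < b ∧ ∃ P : ℤ[X], P.map (Int.castRingHom ℚ) = C (b : ℚ) * q := by
  obtain ⟨b, hbm, hb⟩ := IsLocalization.integerNormalization_spec (nonZeroDivisors ℤ) q
  have hb0 : b ≠ 0 := nonZeroDivisors.ne_zero hbm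
  -- multiplying by `b` once more makes the denominator positive
  refine ⟨b * b, mul_self_pos.mpr hb0,
    C b * IsLocalization.integerNormalization (nonZeroDivisors ℤ) q, ?_⟩
  rw [Polynomial.map_mul]
  erw [hb]
  ext i
  simp [mul_assoc]

theorem floor_of_rational_polynomial_EQP (f g : Polynomial ℤ) (hg : g ≠ 0) :
    ∃ d : ℕ, 0 < d ∧ ∃ Q : ℕ → Polynomial ℚ,
      ∀ᶠ t : ℕ in Filter.atTop,
        ((⌊((f.eval (t : ℤ) : ℤ) : ℚ) / ((g.eval (t : ℤ) : ℤ) : ℚ)⌋ : ℤ) : ℚ) =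
          (Q (t % d)).eval (t : ℚ) := by
  set F : ℚ[X] := f.map (Int.castRingHom ℚ) with hF
  set G : ℚ[X] := g.map (Int.castRingHom ℚ) with hG
  have hG0 : G ≠ 0 := (Polynomial.map_ne_zero_iff (RingHom.injective_int _)).mpr hg
  have hcast : ∀ (p : ℤ[X]) (t : ℕ),
      ((p.eval (t : ℤ) : ℤ) : ℚ) = (p.map (Int.castRingHom ℚ)).eval (t : ℚ) := by
    intro p t
    simp
  obtain ⟨b, hb, P, hP⟩ := exists_int_poly_eq_mul (F / G)
  have hbq : (0 : ℚ) < b := by exact_mod_cast hb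
  have hnat : Tendsto (fun t : ℕ => (t : ℚ)) atTop atTop := tendsto_natCast_atTop_atTop
  have hlim : Tendsto (fun t : ℕ => (F % G).eval (t : ℚ) / G.eval (t : ℚ)) atTop (nhds 0) :=
    (div_tendsto_atTop_zero_of_degree_lt (F % G) G (EuclideanDomain.mod_lt F hG0)).comp hnat
  have hGne : ∀ᶠ t : ℕ in atTop, G.eval (t : ℚ) ≠ 0 :=
    hnat.eventually (eventually_atTop_not_isRoot G hG0)
  obtain ⟨c, hc⟩ : ∃ c : ℤ, ∀ᶠ t : ℕ in atTop,
      0 ≤ (F % G).eval (t : ℚ) / G.eval (t : ℚ) + c / b ∧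
        (F % G).eval (t : ℚ) / G.eval (t : ℚ) + c / b < 1 / b := by
    have hpos : (0 : ℚ) < 1 / b := by positivity
    -- the quotient `r / G` has the sign of the polynomial `r * G`
    rcases eventually_eval_nonneg_or_neg ((F % G) * G) with h | h
    · refine ⟨0, ?_⟩
      filter_upwards [hnat.eventually h, hlim.eventually_lt_const hpos] with t ht ht'
      rw [eval_mul] at ht
      simpa using ⟨div_nonneg_iff.mpr (mul_nonneg_iff.mp ht), by simpa using ht'⟩
    · refine ⟨1, ?_⟩
      filter_upwards [hnat.eventually h, hlim.eventually_const_lt (neg_lt_zero.mpr hpos)]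
        with t ht ht'
      rw [eval_mul] at ht
      have := div_neg_iff.mpr (mul_neg_iff.mp ht)
      push_cast
      constructor <;> linarith
  refine ⟨b.toNat, by omega, fun i => C (1 / (b : ℚ)) *
    (P.map (Int.castRingHom ℚ) - C (c : ℚ) - C (((P.eval (i : ℤ) - c) % b : ℤ) : ℚ)), ?_⟩
  filter_upwards [hGne, hc] with t hGt hct
  have hsplit : ((f.eval (t : ℤ) : ℤ) : ℚ) / ((g.eval (t : ℤ) : ℤ) : ℚ) =
      ((P.eval (t : ℤ) - c : ℤ) : ℚ) / b +
        ((F % G).eval (t : ℚ) / G.eval (t : ℚ) + c / b) := by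
    have hdm : G.eval (t : ℚ) * (F / G).eval (t : ℚ) + (F % G).eval (t : ℚ) = F.eval (t : ℚ) := by
      rw [← eval_mul, ← eval_add, EuclideanDomain.div_add_mod]
    push_cast
    rw [hcast f, hcast g, hcast P, hP, ← hF, ← hG, ← hdm, eval_mul, eval_C]
    field_simp
    ring
  have hmod : (P.eval ((t % b.toNat : ℕ) : ℤ) - c) % b = (P.eval (t : ℤ) - c) % b := by
    refine Int.ModEq.sub_right c ?_
    refine (Int.modEq_iff_dvd.mpr (dvd_trans ?_ (sub_dvd_eval_sub _ _ P)))
    refine Int.modEq_iff_dvd.mp ?_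
    push_cast
    rw [Int.toNat_of_nonneg hb.le]
    exact Int.mod_modEq _ _
  rw [hsplit, floor_div_add_eq_ediv _ b hb _ hct.1 hct.2, hmod]
  simp only [eval_mul, eval_sub, eval_C]
  rw [← hcast P]
  have hn : (((P.eval (t : ℤ) - c : ℤ)) : ℚ) =
      b * ((P.eval (t : ℤ) - c) / b : ℤ) + ((P.eval (t : ℤ) - c) % b : ℤ) := by
    exact_mod_cast (Int.mul_ediv_add_emod (P.eval (t : ℤ) - c) b).symm
  rw [Int.cast_sub] at hn
  rw [hn]
  field_simp
  ring
end
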